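/- arXiv:2205.08246 — 9 statements merged into one kernel-verified Lean document; each statement's English description precedes it below -/
import Mathlib

section
/- Let r_h > 0 and a, Q ∈ ℝ. Define the Kerr–Newman ADM mass M := r_h/2 + (a² + Q²)/(2 r_h), horizon area 𝒜 := 4π (r_h² + a²), and surface gravity κ := (r_h − M)/(r_h² + a²). Then 3M − κ𝒜/(4π) = r_h + 2(a² + Q²)/r_h, and 3M − κ𝒜/(4π) ≥ √(𝒜/(4π)) = √(r_h² + a²), with equality if and only if a = 0 and Q = 0. -/
/-!
Since `κ𝒜/(4π) = r_h − M`, the left-hand side is `4M − r_h = r_h + 2(a² + Q²)/r_h`, which is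
positive. Its square exceeds `r_h² + a²` by `3a² + 4Q² + (2(a² + Q²)/r_h)²`, a sum of
nonnegative terms that vanishes exactly when `a = Q = 0`.
-/

open Real

/-- Penrose-like inequality for the Kerr–Newman black hole (units 16πG = c = 1):
with `M = r_h/2 + (a² + Q²)/(2r_h)`, `𝒜 = 4π(r_h² + a²)`, `κ = (r_h − M)/(r_h² + a²)`,
one has `3M − κ𝒜/(4π) = r_h + 2(a² + Q²)/r_h ≥ √(𝒜/(4π)) = √(r_h² + a²)`,
with equality iff `a = 0` and `Q = 0`. -/
theorem kerr_newman_penrose_like (r_h a Q M 𝒜 κ : ℝ) (hr : 0 < r_h)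
    (hM : M = r_h / 2 + (a ^ 2 + Q ^ 2) / (2 * r_h))
    (h𝒜 : 𝒜 = 4 * π * (r_h ^ 2 + a ^ 2))
    (hκ : κ = (r_h - M) / (r_h ^ 2 + a ^ 2)) :
    3 * M - κ * 𝒜 / (4 * π) = r_h + 2 * (a ^ 2 + Q ^ 2) / r_h ∧
    Real.sqrt (𝒜 / (4 * π)) = Real.sqrt (r_h ^ 2 + a ^ 2) ∧
    3 * M - κ * 𝒜 / (4 * π) ≥ Real.sqrt (𝒜 / (4 * π)) ∧
    (3 * M - κ * 𝒜 / (4 * π) = Real.sqrt (𝒜 / (4 * π)) ↔ a = 0 ∧ Q = 0) := by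
  have hπ : π ≠ 0 := Real.pi_ne_zero
  have hA : 0 < r_h ^ 2 + a ^ 2 := by positivity
  have h1 : 3 * M - κ * 𝒜 / (4 * π) = r_h + 2 * (a ^ 2 + Q ^ 2) / r_h := by
    have hκ𝒜 : κ * 𝒜 / (4 * π) = r_h - M := by
      rw [hκ, h𝒜]
      field_simp
    rw [hκ𝒜, hM]
    field_simp
    ring
  have h2 : 𝒜 / (4 * π) = r_h ^ 2 + a ^ 2 := by
    rw [h𝒜]
    field_simp
  have hpos : 0 ≤ r_h + 2 * (a ^ 2 + Q ^ 2) / r_h := by positivity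
  have hsq : (r_h + 2 * (a ^ 2 + Q ^ 2) / r_h) ^ 2 =
      r_h ^ 2 + a ^ 2 + (3 * a ^ 2 + 4 * Q ^ 2 + (2 * (a ^ 2 + Q ^ 2) / r_h) ^ 2) := by
    field_simp
    ring
  have hdef : 0 ≤ (2 * (a ^ 2 + Q ^ 2) / r_h) ^ 2 := sq_nonneg _
  rw [h1, h2]
  refine ⟨rfl, rfl, Real.sqrt_le_iff.mpr ⟨hpos, ?_⟩, fun h => ?_, ?_⟩
  · rw [hsq]
    linarith [sq_nonneg a, sq_nonneg Q]
  · have h' := congrArg (· ^ 2) h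
    simp only [Real.sq_sqrt hA.le, hsq] at h'
    constructor
    · exact pow_eq_zero_iff two_ne_zero |>.mp (by linarith [sq_nonneg a, sq_nonneg Q])
    · exact pow_eq_zero_iff two_ne_zero |>.mp (by linarith [sq_nonneg a, sq_nonneg Q])
  · rintro ⟨rfl, rfl⟩
    simp [Real.sqrt_sq hr.le]
end

section
/- Under the static spherically symmetric Einstein equations, the quasi-local mass m is differentiable on (r_h, ∞) and m'(r) = (8π/3) e^{−χ(r)/2} r² (ρ(r) + p_T(r)) + (1/3)(1 − e^{−χ(r)/2}) for all r ∈ (r_h, ∞). -/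
/-!
The product rule gives the derivative of the mass from the three field equations. Besides the
exponential prefactor, the terms carrying `1 / f` come from the derivatives of `χ` and `p_r`; their
sum is a multiple of `(ρ + p_r) (1 + 8πr²p_r) / f` with total coefficient zero. In the remaining
polynomial the terms in `f` and in `p_r` cancel, which leaves
`(e^{−χ/2} / 6) (16πr² (ρ + p_T) − 2) + 1 / 3`.
-/

open Real

/-- In the static spherically symmetric setting (units 16πG = c = 1), under the Einstein
equations the quasi-local mass `m(r) = (r e^{−χ/2}/6)(1 − 3f + 8πr²p_r) + r/3` is
differentiable on `(r_h, ∞)` with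
`m'(r) = (8π/3) e^{−χ/2} r² (ρ + p_T) + (1 − e^{−χ/2})/3`. -/
theorem quasilocal_mass_deriv (r_h : ℝ) (hr : 0 < r_h) (f χ ρ p_r p_T : ℝ → ℝ)
    (hf : ∀ r ∈ Set.Ioi r_h, 0 < f r)
    (hf' : ∀ r ∈ Set.Ioi r_h,
      HasDerivAt f ((1 - 8 * π * r ^ 2 * ρ r - f r) / r) r)
    (hχ' : ∀ r ∈ Set.Ioi r_h,
      HasDerivAt χ (-(8 * π * r / f r) * (ρ r + p_r r)) r)
    (hp' : ∀ r ∈ Set.Ioi r_h,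
      HasDerivAt p_r ((ρ r + 4 * p_T r - 3 * p_r r) / (2 * r) -
        (p_r r + ρ r) * (8 * π * p_r r * r ^ 2 + 1) / (2 * r * f r)) r) :
    ∀ r ∈ Set.Ioi r_h,
      HasDerivAt
        (fun x => (x * Real.exp (-χ x / 2) / 6) *
          (1 - 3 * f x + 8 * π * x ^ 2 * p_r x) + x / 3)
        ((8 * π / 3) * Real.exp (-χ r / 2) * r ^ 2 * (ρ r + p_T r) +
          (1 - Real.exp (-χ r / 2)) / 3) r := by
  intro r hr'
  have hr0 : r ≠ 0 := (hr.trans hr').ne'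
  have hfr : f r ≠ 0 := (hf r hr').ne'
  have hexp := ((hχ' r hr').neg.div_const 2).exp
  have hmass :=
    ((((hasDerivAt_id r).mul hexp).div_const 6).mul
      ((((hf' r hr').const_mul 3).const_sub 1).add
        ((((hasDerivAt_id r).pow 2).const_mul (8 * π)).mul (hp' r hr')))).add
      ((hasDerivAt_id r).div_const 3)
  refine hmass.congr_deriv ?_
  -- The exponential is made an atom, so that the remaining identity is one of rational functions;
  -- the terms with `f r` in the denominator, from the derivatives of `χ` and `p_r`, cancel.
  simp only [id, Pi.neg_apply, Pi.mul_apply, Pi.pow_apply, Pi.add_apply]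
  generalize Real.exp (-χ r / 2) = E
  field_simp
  ring
end

section
/- Under the static spherically symmetric Einstein equations with the NEC and with χ(r) → 0 as r → ∞, the quasi-local mass m is nondecreasing on (r_h, ∞). -/
/-!
The derivative of the quasi-local mass collapses, by the Einstein equations, to
`m' = (1 - e^{-χ/2}) / 3 + (8π r² / 3) e^{-χ/2} (ρ + p_T)`:
the terms containing `1 / f` cancel between `χ'` and `p_r'`, and so does everything else except
this combination (`hasDerivAt_mass`). The second term is nonnegative by the tangential null energy
condition. The radial one gives `χ' ≤ 0`, so `χ`, which decreases to its limit `0`, is nonnegative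
(`redshift_nonneg`) and the first term is nonnegative too.
-/

open Real Filter

/-- A differentiable function on `(a, ∞)` with nonpositive derivative and limit `0` at infinity
is nonnegative there. -/
lemma redshift_nonneg {a : ℝ} {χ χ' : ℝ → ℝ}
    (h : ∀ r ∈ Set.Ioi a, HasDerivAt χ (χ' r) r) (hneg : ∀ r ∈ Set.Ioi a, χ' r ≤ 0)
    (h0 : Tendsto χ atTop (nhds 0)) : ∀ r ∈ Set.Ioi a, 0 ≤ χ r := by
  have hanti : AntitoneOn χ (Set.Ioi a) :=
    antitoneOn_of_hasDerivWithinAt_nonpos (convex_Ioi a)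
      (fun r hr => (h r hr).continuousAt.continuousWithinAt)
      (fun r hr => (h r (interior_subset hr)).hasDerivWithinAt)
      (fun r hr => hneg r (interior_subset hr))
  intro r hr
  refine le_of_tendsto h0 ?_
  filter_upwards [eventually_ge_atTop r] with y hy
  exact hanti hr (lt_of_lt_of_le hr hy) hy

/-- The derivative of the quasi-local mass at a single radius `r`, where the Einstein equations
hold with energy density `ρ`, radial pressure `p_r r` and tangential pressure `pT`. -/
lemma hasDerivAt_mass {f χ p_r : ℝ → ℝ} {r ρ pT : ℝ} (hr : 0 < r) (hf : 0 < f r)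
    (hf' : HasDerivAt f ((1 - 8 * π * r ^ 2 * ρ - f r) / r) r)
    (hχ' : HasDerivAt χ (-(8 * π * r / f r) * (ρ + p_r r)) r)
    (hp' : HasDerivAt p_r ((ρ + 4 * pT - 3 * p_r r) / (2 * r) -
        (p_r r + ρ) * (8 * π * p_r r * r ^ 2 + 1) / (2 * r * f r)) r) :
    HasDerivAt
      (fun x => (x * Real.exp (-χ x / 2) / 6) *
        (1 - 3 * f x + 8 * π * x ^ 2 * p_r x) + x / 3)
      ((1 - Real.exp (-χ r / 2)) / 3 +
        8 * π * r ^ 2 / 3 * Real.exp (-χ r / 2) * (ρ + pT)) r := by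
  have hx := hasDerivAt_id' r
  have hE := (hχ'.fun_neg.div_const 2).exp
  have hA := ((hf'.const_mul 3).const_sub 1).fun_add (((hx.fun_pow 2).const_mul (8 * π)).fun_mul hp')
  have hm := (((hx.fun_mul hE).div_const 6).fun_mul hA).fun_add (hx.div_const 3)
  refine hm.congr_deriv ?_
  generalize Real.exp (-χ r / 2) = E
  have hr0 := hr.ne'
  have hf0 := hf.ne'
  field_simp
  ring

/-- In the static spherically symmetric setting (units 16πG = c = 1), under the Einstein
equations with the null energy condition and `χ → 0` at infinity, the quasi-local mass
`m(r) = (r e^{−χ/2}/6)(1 − 3f + 8πr²p_r) + r/3` is nondecreasing on `(r_h, ∞)`. -/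
theorem quasilocal_mass_monotone (r_h : ℝ) (hr : 0 < r_h) (f χ ρ p_r p_T : ℝ → ℝ)
    (hf : ∀ r ∈ Set.Ioi r_h, 0 < f r)
    (hf' : ∀ r ∈ Set.Ioi r_h,
      HasDerivAt f ((1 - 8 * π * r ^ 2 * ρ r - f r) / r) r)
    (hχ' : ∀ r ∈ Set.Ioi r_h,
      HasDerivAt χ (-(8 * π * r / f r) * (ρ r + p_r r)) r)
    (hp' : ∀ r ∈ Set.Ioi r_h,
      HasDerivAt p_r ((ρ r + 4 * p_T r - 3 * p_r r) / (2 * r) -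
        (p_r r + ρ r) * (8 * π * p_r r * r ^ 2 + 1) / (2 * r * f r)) r)
    (hNEC₁ : ∀ r ∈ Set.Ioi r_h, 0 ≤ ρ r + p_r r)
    (hNEC₂ : ∀ r ∈ Set.Ioi r_h, 0 ≤ ρ r + p_T r)
    (hχ₀ : Tendsto χ atTop (nhds 0)) :
    MonotoneOn
      (fun x => (x * Real.exp (-χ x / 2) / 6) *
        (1 - 3 * f x + 8 * π * x ^ 2 * p_r x) + x / 3)
      (Set.Ioi r_h) := by
  have hχ_nonneg := redshift_nonneg hχ'
    (fun r hrr => by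
      have hrpos : 0 < r := hr.trans hrr
      have hfr := hf r hrr
      rw [neg_mul, neg_nonpos]
      exact mul_nonneg (by positivity) (hNEC₁ r hrr)) hχ₀
  have hm : ∀ r ∈ Set.Ioi r_h, _ := fun r hrr =>
    hasDerivAt_mass (hr.trans hrr) (hf r hrr) (hf' r hrr) (hχ' r hrr) (hp' r hrr)
  refine monotoneOn_of_hasDerivWithinAt_nonneg (convex_Ioi r_h)
    (fun r hrr => (hm r hrr).continuousAt.continuousWithinAt)
    (fun r hrr => (hm r (interior_subset hrr)).hasDerivWithinAt) (fun r hrr => ?_)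
  have hrr' : r ∈ Set.Ioi r_h := interior_subset hrr
  have hE : Real.exp (-χ r / 2) ≤ 1 :=
    Real.exp_le_one_iff.mpr (by linarith [hχ_nonneg r hrr'])
  have hT := mul_nonneg
    (show 0 ≤ 8 * π * r ^ 2 / 3 * Real.exp (-χ r / 2) by positivity) (hNEC₂ r hrr')
  linarith
end

section
/- Let r_h > 0, M ∈ ℝ, and let g : [r_h, ∞) → ℝ be nondecreasing with 0 < g(r) ≤ 1 for all r ≥ r_h. If the improper integral ∫_{r_h}^{∞} ((3M − r)/r⁴) g(r) dr converges to a nonnegative value, then 2M ≥ r_h. -/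
/-!
With `c = max (3M) r_h`, monotonicity of `g` gives `(3M - r) g(r) ≤ (3M - r) g(c)` for every
`r ≥ r_h`: the factor `3M - r` is nonnegative below `3M` and nonpositive above it. (Taking the
maximum with `r_h` covers the case where `3M` lies outside the domain of `g`.) Dividing by `r⁴`
and integrating, the nonnegative integral is at most `g(c) (M / r_h³ - 1 / (2 r_h²))`, and
`g(c) > 0` forces `2M ≥ r_h`.
-/

open Real MeasureTheory

/-- On the half-line `r > 0`, the weight is a combination of the integrable powers
`r ^ (-4)` and `r ^ (-3)`. -/
lemma penrose_weight_eq (M : ℝ) {r : ℝ} (hr : 0 < r) :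
    3 * M * r ^ (-4 : ℝ) - r ^ (-3 : ℝ) = (3 * M - r) / r ^ 4 := by
  rw [rpow_neg hr.le, rpow_neg hr.le]
  norm_cast
  field_simp

lemma penrose_weight_integrableOn (M : ℝ) {a : ℝ} (ha : 0 < a) :
    IntegrableOn (fun r : ℝ => (3 * M - r) / r ^ 4) (Set.Ioi a) := by
  have h4 := integrableOn_Ioi_rpow_of_lt (a := -4) (by norm_num) ha
  have h3 := integrableOn_Ioi_rpow_of_lt (a := -3) (by norm_num) ha
  exact IntegrableOn.congr_fun ((h4.const_mul (3 * M)).sub h3)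
    (fun r hr => penrose_weight_eq M (ha.trans hr)) measurableSet_Ioi

lemma penrose_weight_integral (M : ℝ) {a : ℝ} (ha : 0 < a) :
    ∫ r in Set.Ioi a, (3 * M - r) / r ^ 4 = M / a ^ 3 - 1 / (2 * a ^ 2) := by
  have h4 := integrableOn_Ioi_rpow_of_lt (a := -4) (by norm_num) ha
  have h3 := integrableOn_Ioi_rpow_of_lt (a := -3) (by norm_num) ha
  rw [← setIntegral_congr_fun measurableSet_Ioi
      (fun r hr => penrose_weight_eq M (ha.trans hr)),
    integral_sub (h4.const_mul _) h3, integral_const_mul,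
    integral_Ioi_rpow_of_lt (by norm_num) ha, integral_Ioi_rpow_of_lt (by norm_num) ha,
    show (-4 : ℝ) + 1 = -3 by norm_num, show (-3 : ℝ) + 1 = -2 by norm_num,
    rpow_neg ha.le, rpow_neg ha.le]
  norm_cast
  field_simp
  push_cast
  ring

/-- Key analytic lemma for the Penrose inequality in the static spherically symmetric
case: if `g : [r_h, ∞) → ℝ` is nondecreasing with `0 < g ≤ 1`, and the improper
integral `∫_{r_h}^∞ ((3M − r)/r⁴) g(r) dr` converges to a nonnegative value, then
`2M ≥ r_h`. -/
theorem penrose_key_lemma (r_h M : ℝ) (hr : 0 < r_h) (g : ℝ → ℝ)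
    (hg_mono : MonotoneOn g (Set.Ici r_h))
    (hg_pos : ∀ r ∈ Set.Ici r_h, 0 < g r)
    (hg_le : ∀ r ∈ Set.Ici r_h, g r ≤ 1)
    (hint : IntegrableOn (fun r => (3 * M - r) / r ^ 4 * g r) (Set.Ioi r_h))
    (hnonneg : 0 ≤ ∫ r in Set.Ioi r_h, (3 * M - r) / r ^ 4 * g r) :
    2 * M ≥ r_h := by
  have hc : max (3 * M) r_h ∈ Set.Ici r_h := Set.mem_Ici.2 (le_max_right _ _)
  have hgc := hg_pos _ hc
  have hle : ∫ r in Set.Ioi r_h, (3 * M - r) / r ^ 4 * g r ≤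
      ∫ r in Set.Ioi r_h, (3 * M - r) / r ^ 4 * g (max (3 * M) r_h) := by
    refine setIntegral_mono_on hint ((penrose_weight_integrableOn M hr).mul_const _)
      measurableSet_Ioi fun r hrr => ?_
    have hr' : r_h < r := hrr
    have hr4 : 0 ≤ r ^ 4 := by positivity
    rcases le_total r (3 * M) with h | h
    · exact mul_le_mul_of_nonneg_left
        (hg_mono hr'.le hc (h.trans (le_max_left _ _)))
        (div_nonneg (sub_nonneg.2 h) hr4)
    · exact mul_le_mul_of_nonpos_left
        (hg_mono hc hr'.le (max_le h hr'.le))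
        (div_nonpos_of_nonpos_of_nonneg (sub_nonpos.2 h) hr4)
  rw [integral_mul_const, penrose_weight_integral M hr] at hle
  have hval : 0 ≤ M / r_h ^ 3 - 1 / (2 * r_h ^ 2) :=
    nonneg_of_mul_nonneg_left (hnonneg.trans hle) hgc
  have hfac : M / r_h ^ 3 - 1 / (2 * r_h ^ 2) = (2 * M - r_h) / (2 * r_h ^ 3) := by
    field_simp
  rw [hfac, le_div_iff₀ (by positivity), zero_mul] at hval
  linarith
end

section
/- Under the static spherically symmetric Einstein equations with the NEC, asymptotic flatness, and a regular horizon at r_h, if either equality 3M = κ𝒜/(4π) + √(𝒜/(4π)) or equality 2M = √(𝒜/(4π)) holds, then χ(r) = 0 and f(r) = 1 − 2M/r for all r ∈ (r_h, ∞), and 2M = r_h; that is, the exterior geometry is Schwarzschild. -/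
open Real Filter

/-!
The proof rests on two monotone quantities. Write `E = exp (-χ/2)`.

* The field equations give `m' = (1 - E)/3 + (8π r²/3) E (ρ + p_T)`. The NEC makes `χ` antitone, so
  `χ ≥ 0` and `E ≤ 1`, and hence `m` is monotone (`hasDerivAt_qlMass`). If `m` takes its limit `M`
  already at the horizon, it is constant. The horizon regularity `r_h f'(r_h) = 1 - 8π r_h² ρ(r_h)`
  turns the first equality into exactly `m(r_h) = M`.

* `(E² f / r²)' = E (6m - 2r) / r⁴` (`hasDerivAt_redshift`), so with `E₀ = E(3M)` the function
  `E² f / r² - E₀ (1/r² - 2M/r³)` has derivative `6E(m - M)/r⁴ + (E - E₀)(6M - 2r)/r⁴`. Both terms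
  are nonpositive, the second because `E` is monotone and `6M - 2r` changes sign at `r = 3M`. The
  function tends to `0` at infinity, and under `2M = r_h` also at the horizon, so it is constant
  and `m = M` everywhere.

In both cases `m` is constant, so `m' = 0`, which forces `χ = 0` and `ρ + p_T = 0`, and then
`χ' = 0` forces `ρ + p_r = 0`. Thus `p_r' = 0`; asymptotic flatness excludes a nonzero constant
pressure (a cosmological term), and `m = M` becomes `f = 1 - 2M/r`.
-/

/-! ### Rigidity for monotone functions -/

/-- A nondecreasing function on `(a, ∞)` with the same limit at both ends is constant; hence its
nonnegative derivative vanishes. This is the source of both rigidity arguments. -/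
lemma eq_of_deriv_nonneg_of_tendsto {a L : ℝ} {g g' : ℝ → ℝ}
    (hg : ∀ r ∈ Set.Ioi a, HasDerivAt g (g' r) r) (h0 : ∀ r ∈ Set.Ioi a, 0 ≤ g' r)
    (ha : Tendsto g (nhdsWithin a (Set.Ioi a)) (nhds L)) (hi : Tendsto g atTop (nhds L)) :
    ∀ r ∈ Set.Ioi a, g r = L ∧ g' r = 0 := by
  have hmono : MonotoneOn g (Set.Ioi a) := by
    apply monotoneOn_of_deriv_nonneg (convex_Ioi a)
    · exact fun r hr => (hg r hr).continuousAt.continuousWithinAt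
    · rw [interior_Ioi]
      exact fun r hr => (hg r hr).differentiableAt.differentiableWithinAt
    · rw [interior_Ioi]
      intro r hr
      rw [(hg r hr).deriv]
      exact h0 r hr
  have hval : ∀ r ∈ Set.Ioi a, g r = L := by
    intro r hr
    apply le_antisymm
    · apply ge_of_tendsto hi
      filter_upwards [eventually_ge_atTop r] with x hx
      exact hmono hr (lt_of_lt_of_le hr hx) hx
    · apply le_of_tendsto ha
      filter_upwards [Ioc_mem_nhdsGT hr] with x hx
      exact hmono hx.1 hr hx.2
  intro r hr
  refine ⟨hval r hr, (hg r hr).unique ?_⟩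
  refine (hasDerivAt_const r L).congr_of_eventuallyEq ?_
  filter_upwards [Ioi_mem_nhds hr] with x hx
  exact hval x hx

/-! ### Derivative identities from the field equations -/

lemma hasDerivAt_exp_half {χ : ℝ → ℝ} {r F h : ℝ}
    (hχ : HasDerivAt χ (-(8 * π * r / F) * h) r) :
    HasDerivAt (fun x => Real.exp (-χ x / 2))
      (Real.exp (-χ r / 2) * (4 * π * r / F * h)) r := by
  refine HasDerivAt.congr_deriv ((hχ.neg.div_const 2).exp) ?_
  change Real.exp (-χ r / 2) * (-(-(8 * π * r / F) * h) / 2) = _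
  ring

/-- The derivative of the quasi-local mass: the terms in `p_r` and `f` cancel by the field
equations, leaving only manifestly nonnegative ones under the NEC and `χ ≥ 0`. -/
lemma hasDerivAt_qlMass {f χ ρ p_r p_T : ℝ → ℝ} {r : ℝ} (hr : r ≠ 0) (hf : f r ≠ 0)
    (hf' : HasDerivAt f ((1 - 8 * π * r ^ 2 * ρ r - f r) / r) r)
    (hχ' : HasDerivAt χ (-(8 * π * r / f r) * (ρ r + p_r r)) r)
    (hp' : HasDerivAt p_r ((ρ r + 4 * p_T r - 3 * p_r r) / (2 * r) -
        (p_r r + ρ r) * (8 * π * p_r r * r ^ 2 + 1) / (2 * r * f r)) r) :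
    HasDerivAt (fun x => (x * Real.exp (-χ x / 2) / 6) *
        (1 - 3 * f x + 8 * π * x ^ 2 * p_r x) + x / 3)
      ((1 - Real.exp (-χ r / 2)) / 3 +
        8 * π * r ^ 2 / 3 * Real.exp (-χ r / 2) * (ρ r + p_T r)) r := by
  have hE := hasDerivAt_exp_half hχ'
  have h1 := ((hasDerivAt_id' r).mul hE).div_const 6
  have h2 := ((hf'.const_mul 3).const_sub 1).add
    ((((hasDerivAt_id' r).pow 2).const_mul (8 * π)).mul hp')
  refine HasDerivAt.congr_deriv ((h1.mul h2).add ((hasDerivAt_id' r).div_const 3)) ?_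
  simp only [Pi.mul_apply, Pi.add_apply, Pi.pow_apply]
  field_simp
  ring

/-- The relation between the lapse `E² f` and the quasi-local mass: the derivative of
`E² f / r²` is `E (6m - 2r) / r⁴`. -/
lemma hasDerivAt_redshift {f χ ρ p_r : ℝ → ℝ} {r : ℝ} (hr : r ≠ 0) (hf : f r ≠ 0)
    (hf' : HasDerivAt f ((1 - 8 * π * r ^ 2 * ρ r - f r) / r) r)
    (hχ' : HasDerivAt χ (-(8 * π * r / f r) * (ρ r + p_r r)) r) :
    HasDerivAt (fun x => Real.exp (-χ x / 2) ^ 2 * f x / x ^ 2)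
      (Real.exp (-χ r / 2) * (6 * ((r * Real.exp (-χ r / 2) / 6) *
        (1 - 3 * f r + 8 * π * r ^ 2 * p_r r) + r / 3) - 2 * r) / r ^ 4) r := by
  have hE := hasDerivAt_exp_half hχ'
  refine HasDerivAt.congr_deriv (((hE.pow 2).mul hf').div ((hasDerivAt_id' r).pow 2) (pow_ne_zero 2 hr)) ?_
  simp only [Pi.mul_apply, Pi.pow_apply]
  field_simp
  ring

/-! ### Penrose rigidity -/

/-- Rigidity for the static spherically symmetric case (units 16πG = c = 1): under the
Einstein equations with the NEC, asymptotic flatness, ADM mass `M = lim_{r→∞} m(r)`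
and a regular horizon at `r_h`, if either equality `3M = κ𝒜/(4π) + √(𝒜/(4π))` or
equality `2M = √(𝒜/(4π))` holds, then `χ ≡ 0`, `f(r) = 1 − 2M/r` on `(r_h, ∞)` and
`2M = r_h`: the exterior geometry is Schwarzschild. -/
theorem penrose_rigidity_static (r_h M κ 𝒜 fd : ℝ) (hr : 0 < r_h)
    (f χ ρ p_r p_T : ℝ → ℝ)
    (hf : ∀ r ∈ Set.Ioi r_h, 0 < f r)
    (hf' : ∀ r ∈ Set.Ioi r_h,
      HasDerivAt f ((1 - 8 * π * r ^ 2 * ρ r - f r) / r) r)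
    (hχ' : ∀ r ∈ Set.Ioi r_h,
      HasDerivAt χ (-(8 * π * r / f r) * (ρ r + p_r r)) r)
    (hp' : ∀ r ∈ Set.Ioi r_h,
      HasDerivAt p_r ((ρ r + 4 * p_T r - 3 * p_r r) / (2 * r) -
        (p_r r + ρ r) * (8 * π * p_r r * r ^ 2 + 1) / (2 * r * f r)) r)
    (hNEC₁ : ∀ r ∈ Set.Ioi r_h, 0 ≤ ρ r + p_r r)
    (hNEC₂ : ∀ r ∈ Set.Ioi r_h, 0 ≤ ρ r + p_T r)
    -- asymptotic flatness and ADM mass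
    (hfinfty : Tendsto f atTop (nhds 1))
    (hχinfty : Tendsto χ atTop (nhds 0))
    (hM : Tendsto
      (fun x => (x * Real.exp (-χ x / 2) / 6) *
        (1 - 3 * f x + 8 * π * x ^ 2 * p_r x) + x / 3) atTop (nhds M))
    -- regular horizon at r_h
    (hfc : ContinuousWithinAt f (Set.Ici r_h) r_h)
    (hχc : ContinuousWithinAt χ (Set.Ici r_h) r_h)
    (hρc : ContinuousWithinAt ρ (Set.Ici r_h) r_h)
    (hpc : ContinuousWithinAt p_r (Set.Ici r_h) r_h)
    (hfh : f r_h = 0)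
    (hfd : HasDerivWithinAt f fd (Set.Ici r_h) r_h)
    (hNECh : ρ r_h + p_r r_h = 0)
    -- surface gravity and horizon area
    (hκ : κ = fd * Real.exp (-χ r_h / 2) / 2)
    (h𝒜 : 𝒜 = 4 * π * r_h ^ 2)
    -- saturation of either inequality
    (heq : 3 * M = κ * 𝒜 / (4 * π) + Real.sqrt (𝒜 / (4 * π)) ∨
      2 * M = Real.sqrt (𝒜 / (4 * π))) :
    (∀ r ∈ Set.Ioi r_h, χ r = 0 ∧ f r = 1 - 2 * M / r) ∧ 2 * M = r_h := by
  set m : ℝ → ℝ := fun x => (x * Real.exp (-χ x / 2) / 6) *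
        (1 - 3 * f x + 8 * π * x ^ 2 * p_r x) + x / 3 with hm
  have hpos : ∀ r ∈ Set.Ioi r_h, 0 < r := fun r h => hr.trans h
  have hπ := Real.pi_pos
  have hχanti : AntitoneOn χ (Set.Ioi r_h) := by
    apply antitoneOn_of_deriv_nonpos (convex_Ioi r_h)
    · exact fun r h => (hχ' r h).continuousAt.continuousWithinAt
    · rw [interior_Ioi]
      exact fun r h => (hχ' r h).differentiableAt.differentiableWithinAt
    · rw [interior_Ioi]
      intro r h
      rw [(hχ' r h).deriv]
      have h1 := hNEC₁ r h
      have h2 := hf r h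
      have h3 := hpos r h
      have : 0 ≤ 8 * π * r / f r * (ρ r + p_r r) := by positivity
      linarith
  have hχ0 : ∀ r ∈ Set.Ioi r_h, 0 ≤ χ r := by
    intro r h
    apply le_of_tendsto hχinfty
    filter_upwards [eventually_ge_atTop r] with x hx
    exact hχanti h (lt_of_lt_of_le h hx) hx
  have hE1 : ∀ r ∈ Set.Ioi r_h, Real.exp (-χ r / 2) ≤ 1 := by
    intro r h
    have := hχ0 r h
    exact Real.exp_le_one_iff.2 (by linarith)
  have hEmono : MonotoneOn (fun r => Real.exp (-χ r / 2)) (Set.Ioi r_h) := by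
    intro a ha b hb hab
    have := hχanti ha hb hab
    exact Real.exp_le_exp.2 (by linarith)
  have hmd := fun r (h : r ∈ Set.Ioi r_h) =>
    hasDerivAt_qlMass (hpos r h).ne' (hf r h).ne' (hf' r h) (hχ' r h) (hp' r h)
  have hmnn : ∀ r ∈ Set.Ioi r_h, 0 ≤ (1 - Real.exp (-χ r / 2)) / 3 +
        8 * π * r ^ 2 / 3 * Real.exp (-χ r / 2) * (ρ r + p_T r) := by
    intro r h
    have h1 := hE1 r h
    have h2 := hNEC₂ r h
    have : 0 ≤ 8 * π * r ^ 2 / 3 * Real.exp (-χ r / 2) * (ρ r + p_T r) := by positivity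
    linarith
  have hmmono : MonotoneOn m (Set.Ioi r_h) := by
    apply monotoneOn_of_deriv_nonneg (convex_Ioi r_h)
    · exact fun r h => (hmd r h).continuousAt.continuousWithinAt
    · rw [interior_Ioi]
      exact fun r h => (hmd r h).differentiableAt.differentiableWithinAt
    · rw [interior_Ioi]
      intro r h
      rw [(hmd r h).deriv]
      exact hmnn r h
  have hmM : ∀ r ∈ Set.Ioi r_h, m r ≤ M := by
    intro r h
    apply ge_of_tendsto hM
    filter_upwards [eventually_ge_atTop r] with x hx
    exact hmmono h (lt_of_lt_of_le h hx) hx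
  have hsub : nhdsWithin r_h (Set.Ioi r_h) ≤ nhdsWithin r_h (Set.Ici r_h) :=
    nhdsWithin_mono _ Set.Ioi_subset_Ici_self
  have hidc : ContinuousWithinAt (fun x : ℝ => x) (Set.Ici r_h) r_h := continuousWithinAt_id
  have hEc : ContinuousWithinAt (fun x => Real.exp (-χ x / 2)) (Set.Ici r_h) r_h :=
    (hχc.neg.div_const 2).rexp
  have h4π : 𝒜 / (4 * π) = r_h ^ 2 := by
    rw [h𝒜]
    field_simp
  have hsqrt : Real.sqrt (𝒜 / (4 * π)) = r_h := by
    rw [h4π, Real.sqrt_sq hr.le]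
  have hconst : ∀ r ∈ Set.Ioi r_h, m r = M := by
    rw [hsqrt] at heq
    rcases heq with heq | heq
    -- The first equality says `m r_h = M`, once `fd` is identified as the limit of `f'` at `r_h`.
    · have hfd2 : fd = (1 - 8 * π * r_h ^ 2 * ρ r_h) / r_h := by
        have hlim : ContinuousWithinAt (fun r => (1 - 8 * π * r ^ 2 * ρ r - f r) / r)
            (Set.Ici r_h) r_h :=
          ((continuousWithinAt_const.sub
            ((continuousWithinAt_const.mul (hidc.pow 2)).mul hρc)).sub hfc).div hidc hr.ne'
        have hd : HasDerivWithinAt f ((1 - 8 * π * r_h ^ 2 * ρ r_h - f r_h) / r_h)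
            (Set.Ici r_h) r_h := by
          apply hasDerivWithinAt_Ici_of_tendsto_deriv (s := Set.Ioi r_h)
          · exact fun r h => (hf' r h).differentiableAt.differentiableWithinAt
          · exact hfc.mono Set.Ioi_subset_Ici_self
          · exact self_mem_nhdsWithin
          · refine (hlim.tendsto.mono_left hsub).congr' ?_
            filter_upwards [self_mem_nhdsWithin] with r h
            exact (hf' r h).deriv.symm
        rw [hfh, sub_zero] at hd
        exact (uniqueDiffOn_Ici r_h r_h Set.self_mem_Ici).eq_deriv _ hfd hd
      have hmc : ContinuousWithinAt m (Set.Ici r_h) r_h :=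
        (((hidc.mul hEc).div_const 6).mul ((continuousWithinAt_const.sub
          (continuousWithinAt_const.mul hfc)).add
          ((continuousWithinAt_const.mul (hidc.pow 2)).mul hpc))).add (hidc.div_const 3)
      have hmh : m r_h = M := by
        have hp : p_r r_h = -ρ r_h := by linarith
        rw [mul_div_assoc, h4π, hκ, hfd2] at heq
        simp only [hm, hfh, hp]
        field_simp at heq ⊢
        linarith
      have ht := hmc.tendsto.mono_left hsub
      rw [hmh] at ht
      exact fun r h => (eq_of_deriv_nonneg_of_tendsto hmd hmnn ht hM r h).1
    -- Under `2M = r_h` the weight `6M - 2r` changes sign at `3M = 3 r_h / 2`, inside the exterior.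
    · have h3M : 3 * M ∈ Set.Ioi r_h := by
        rw [Set.mem_Ioi]
        linarith
      set E₀ := Real.exp (-χ (3 * M) / 2) with hE₀
      have hGd : ∀ r ∈ Set.Ioi r_h, HasDerivAt
          (fun x => E₀ * (1 / x ^ 2 - 2 * M / x ^ 3) - Real.exp (-χ x / 2) ^ 2 * f x / x ^ 2)
          (6 * Real.exp (-χ r / 2) * (M - m r) / r ^ 4 +
            (E₀ - Real.exp (-χ r / 2)) * (6 * M - 2 * r) / r ^ 4) r := by
        intro r h
        have hr0 := (hpos r h).ne'
        have h1 := hasDerivAt_redshift hr0 (hf r h).ne' (hf' r h) (hχ' r h)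
        have h2 := ((hasDerivAt_const r (1 : ℝ)).div ((hasDerivAt_id' r).pow 2)
          (pow_ne_zero 2 hr0)).sub ((hasDerivAt_const r (2 * M)).div ((hasDerivAt_id' r).pow 3)
          (pow_ne_zero 3 hr0))
        refine HasDerivAt.congr_deriv ((h2.const_mul E₀).sub h1) ?_
        simp only [hm, Pi.pow_apply]
        field_simp
        ring
      have hA : ∀ r ∈ Set.Ioi r_h, 0 ≤ 6 * Real.exp (-χ r / 2) * (M - m r) / r ^ 4 := by
        intro r h
        have := sub_nonneg.2 (hmM r h)
        positivity
      have hB : ∀ r ∈ Set.Ioi r_h,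
          0 ≤ (E₀ - Real.exp (-χ r / 2)) * (6 * M - 2 * r) / r ^ 4 := by
        intro r h
        refine div_nonneg ?_ (by positivity)
        rcases le_total r (3 * M) with h' | h'
        · exact mul_nonneg (sub_nonneg.2 (hEmono h h3M h')) (by linarith)
        · exact mul_nonneg_of_nonpos_of_nonpos (sub_nonpos.2 (hEmono h3M h h')) (by linarith)
      have hGh : Tendsto
          (fun x => E₀ * (1 / x ^ 2 - 2 * M / x ^ 3) - Real.exp (-χ x / 2) ^ 2 * f x / x ^ 2)
          (nhdsWithin r_h (Set.Ioi r_h)) (nhds 0) := by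
        have hc : ContinuousWithinAt
            (fun x => E₀ * (1 / x ^ 2 - 2 * M / x ^ 3) - Real.exp (-χ x / 2) ^ 2 * f x / x ^ 2)
            (Set.Ici r_h) r_h :=
          (continuousWithinAt_const.mul ((continuousWithinAt_const.div (hidc.pow 2)
            (pow_ne_zero 2 hr.ne')).sub (continuousWithinAt_const.div (hidc.pow 3)
            (pow_ne_zero 3 hr.ne')))).sub
            (((hEc.pow 2).mul hfc).div (hidc.pow 2) (pow_ne_zero 2 hr.ne'))
        have h0 := hc.tendsto.mono_left hsub
        have hz : E₀ * (1 / r_h ^ 2 - 2 * M / r_h ^ 3) -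
            Real.exp (-χ r_h / 2) ^ 2 * f r_h / r_h ^ 2 = 0 := by
          rw [hfh, heq]
          field_simp
          ring
        rwa [hz] at h0
      have hGi : Tendsto
          (fun x => E₀ * (1 / x ^ 2 - 2 * M / x ^ 3) - Real.exp (-χ x / 2) ^ 2 * f x / x ^ 2)
          atTop (nhds 0) := by
        have h2 : Tendsto (fun x : ℝ => x ^ 2) atTop atTop := tendsto_pow_atTop two_ne_zero
        have h3 : Tendsto (fun x : ℝ => x ^ 3) atTop atTop := tendsto_pow_atTop three_ne_zero
        have hE : Tendsto (fun x => Real.exp (-χ x / 2)) atTop (nhds (Real.exp (-0 / 2))) :=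
          (Real.continuous_exp.tendsto _).comp (hχinfty.neg.div_const 2)
        have := (((tendsto_const_nhds (x := (1 : ℝ))).div_atTop h2).sub
          ((tendsto_const_nhds (x := 2 * M)).div_atTop h3)).const_mul E₀ |>.sub
          (((hE.pow 2).mul hfinfty).div_atTop h2)
        simpa using this
      intro r h
      have hz := (eq_of_deriv_nonneg_of_tendsto hGd (fun r h => add_nonneg (hA r h) (hB r h))
        hGh hGi r h).2
      have hz' : 6 * Real.exp (-χ r / 2) * (M - m r) / r ^ 4 = 0 :=
        le_antisymm (by linarith [hB r h]) (hA r h)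
      have hr0 := (hpos r h).ne'
      have hE0 := Real.exp_pos (-χ r / 2)
      have : M - m r = 0 := by
        simpa [hr0, hE0.ne'] using hz'
      linarith
  have hm0 : ∀ r ∈ Set.Ioi r_h, (1 - Real.exp (-χ r / 2)) / 3 +
        8 * π * r ^ 2 / 3 * Real.exp (-χ r / 2) * (ρ r + p_T r) = 0 := by
    intro r h
    refine (hmd r h).unique ((hasDerivAt_const r M).congr_of_eventuallyEq ?_)
    filter_upwards [Ioi_mem_nhds h] with x hx
    exact hconst x hx
  have hχz : ∀ r ∈ Set.Ioi r_h, χ r = 0 := by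
    intro r h
    have h1 := hE1 r h
    have h2 := hNEC₂ r h
    have h3 : 0 ≤ 8 * π * r ^ 2 / 3 * Real.exp (-χ r / 2) * (ρ r + p_T r) := by positivity
    have h4 : Real.exp (-χ r / 2) = 1 := by linarith [hm0 r h]
    have := Real.exp_eq_one_iff _ |>.1 h4
    linarith
  have hT : ∀ r ∈ Set.Ioi r_h, ρ r + p_T r = 0 := by
    intro r h
    have h1 := hm0 r h
    have hr0 := (hpos r h).ne'
    rw [hχz r h] at h1
    simpa [hr0, hπ.ne'] using h1
  have hR : ∀ r ∈ Set.Ioi r_h, ρ r + p_r r = 0 := by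
    intro r h
    have h1 : -(8 * π * r / f r) * (ρ r + p_r r) = 0 := by
      refine (hχ' r h).unique ((hasDerivAt_const r (0 : ℝ)).congr_of_eventuallyEq ?_)
      filter_upwards [Ioi_mem_nhds h] with x hx
      exact hχz x hx
    have hr0 := (hpos r h).ne'
    have hf0 := (hf r h).ne'
    simpa [hr0, hf0, hπ.ne'] using h1
  have hp0 : ∀ r ∈ Set.Ioi r_h, HasDerivAt p_r 0 r := by
    intro r h
    have h1 := hp' r h
    have h2 : ρ r + 4 * p_T r - 3 * p_r r = 0 := by linarith [hT r h, hR r h]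
    have h3 : p_r r + ρ r = 0 := by linarith [hR r h]
    rwa [h2, h3, zero_mul, zero_div, zero_div, sub_zero] at h1
  have hfp : ∀ r ∈ Set.Ioi r_h, 8 * π * r ^ 2 * p_r r = 6 * M / r + 3 * f r - 3 := by
    intro r h
    have h1 := hconst r h
    have hr0 := (hpos r h).ne'
    simp only [hm, hχz r h, neg_zero, zero_div, Real.exp_zero] at h1
    field_simp
    linarith
  -- `8π r² p_r → 0` while `p_r` is constant, so `p_r = 0`.
  have hpz : ∀ r ∈ Set.Ioi r_h, p_r r = 0 := by
    intro r h
    have hcst : ∀ x ∈ Set.Ioi r_h, p_r x = p_r r := fun x hx =>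
      isOpen_Ioi.is_const_of_deriv_eq_zero isPreconnected_Ioi
        (fun y hy => (hp0 y hy).differentiableAt.differentiableWithinAt)
        (fun y hy => (hp0 y hy).deriv) hx h
    have hlim : Tendsto (fun x : ℝ => 6 * M / x + 3 * f x - 3) atTop (nhds 0) := by
      have := (((tendsto_const_nhds (x := 6 * M)).div_atTop tendsto_id).add
        (hfinfty.const_mul 3)).sub_const 3
      simpa using this
    have h2 : Tendsto (fun x : ℝ => x ^ 2) atTop atTop := tendsto_pow_atTop two_ne_zero
    have hq : Tendsto p_r atTop (nhds 0) := by
      refine ((hlim.div_atTop h2).div_const (8 * π)).congr' ?_ |>.trans_eq (by simp)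
      filter_upwards [eventually_gt_atTop r_h] with x hx
      have hx0 := (hpos x hx).ne'
      rw [← hfp x hx]
      field_simp
    refine tendsto_nhds_unique (tendsto_const_nhds.congr' ?_) hq
    filter_upwards [eventually_gt_atTop r_h] with x hx
    exact (hcst x hx).symm
  have hfS : ∀ r ∈ Set.Ioi r_h, f r = 1 - 2 * M / r := by
    intro r h
    have h1 := hfp r h
    rw [hpz r h] at h1
    have h2 : 6 * M / r = 3 * (2 * M / r) := by ring
    linarith
  refine ⟨fun r h => ⟨hχz r h, hfS r h⟩, ?_⟩
  have h1 : Tendsto f (nhdsWithin r_h (Set.Ioi r_h)) (nhds 0) := by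
    have := hfc.tendsto.mono_left hsub
    rwa [hfh] at this
  have h2 : Tendsto f (nhdsWithin r_h (Set.Ioi r_h)) (nhds (1 - 2 * M / r_h)) := by
    have hc : ContinuousWithinAt (fun x => 1 - 2 * M / x) (Set.Ici r_h) r_h :=
      continuousWithinAt_const.sub (continuousWithinAt_const.div hidc hr.ne')
    refine (hc.tendsto.mono_left hsub).congr' ?_
    filter_upwards [self_mem_nhdsWithin] with r h
    exact (hfS r h).symm
  have h3 := tendsto_nhds_unique h1 h2
  field_simp at h3
  linarith
end

section
/- Consider the static spherically symmetric Einstein equations on (0, ∞) (horizonless regular case) with the NEC and χ(r) → 0 as r → ∞, and assume regularity at the origin: f is bounded on a neighborhood of 0 and r³ p_r(r) → 0 as r → 0⁺. If the ADM mass M := lim_{r→∞} m(r) exists, then M ≥ 0. -/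
open Real Filter

/-!
The Einstein equations make the quasi-local mass `m` nondecreasing in `r`: all terms that are not controlled
by the energy condition cancel, leaving
`m' = (1 - e^{-χ/2}) / 3 + (8/3) π r² e^{-χ/2} (ρ + p_T)`.
The second summand is nonnegative by the NEC. The NEC also makes `χ` nonincreasing, so `χ → 0` at
infinity forces `χ ≥ 0`, and the first summand is nonnegative too. Finally `0 < e^{-χ/2} ≤ 1` stays
bounded near the origin (even if `χ` blows up there), while `r f → 0` and `r³ p_r → 0`, so `m → 0`
as `r → 0⁺`. Hence `0 ≤ m(r) ≤ M`.
-/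

/-- Positive mass theorem for the horizonless regular static spherically symmetric case
(units 16πG = c = 1): under the Einstein equations on `(0, ∞)` with the NEC, `χ → 0`
at infinity, `f` bounded near the origin and `r³ p_r(r) → 0` as `r → 0⁺`, the ADM mass
`M = lim_{r→∞} m(r)` (assumed to exist) satisfies `M ≥ 0`. -/
theorem positive_mass_static (M : ℝ) (f χ ρ p_r p_T : ℝ → ℝ)
    (hf : ∀ r ∈ Set.Ioi (0 : ℝ), 0 < f r)
    (hf' : ∀ r ∈ Set.Ioi (0 : ℝ),
      HasDerivAt f ((1 - 8 * π * r ^ 2 * ρ r - f r) / r) r)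
    (hχ' : ∀ r ∈ Set.Ioi (0 : ℝ),
      HasDerivAt χ (-(8 * π * r / f r) * (ρ r + p_r r)) r)
    (hp' : ∀ r ∈ Set.Ioi (0 : ℝ),
      HasDerivAt p_r ((ρ r + 4 * p_T r - 3 * p_r r) / (2 * r) -
        (p_r r + ρ r) * (8 * π * p_r r * r ^ 2 + 1) / (2 * r * f r)) r)
    (hNEC₁ : ∀ r ∈ Set.Ioi (0 : ℝ), 0 ≤ ρ r + p_r r)
    (hNEC₂ : ∀ r ∈ Set.Ioi (0 : ℝ), 0 ≤ ρ r + p_T r)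
    (hχinfty : Tendsto χ atTop (nhds 0))
    -- regularity at the origin
    (hfbdd : ∃ C : ℝ, ∀ᶠ r in nhdsWithin (0 : ℝ) (Set.Ioi 0), |f r| ≤ C)
    (hpr0 : Tendsto (fun r => r ^ 3 * p_r r) (nhdsWithin (0 : ℝ) (Set.Ioi 0)) (nhds 0))
    -- ADM mass exists
    (hM : Tendsto
      (fun x => (x * Real.exp (-χ x / 2) / 6) *
        (1 - 3 * f x + 8 * π * x ^ 2 * p_r x) + x / 3) atTop (nhds M)) :
    0 ≤ M := by
  have hχdiff : DifferentiableOn ℝ χ (Set.Ioi 0) := fun r hr =>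
    (hχ' r hr).differentiableAt.differentiableWithinAt
  have hχanti : AntitoneOn χ (Set.Ioi 0) := by
    refine antitoneOn_of_deriv_nonpos (convex_Ioi 0) hχdiff.continuousOn
      (hχdiff.mono interior_subset) fun r hr => ?_
    rw [interior_Ioi] at hr
    have hr0 : 0 < r := hr
    have hfr := hf r hr
    rw [(hχ' r hr).deriv, neg_mul]
    exact neg_nonpos.mpr (mul_nonneg (by positivity) (hNEC₁ r hr))
  have hχ0 : ∀ r ∈ Set.Ioi (0 : ℝ), 0 ≤ χ r := fun r hr => by
    refine le_of_tendsto hχinfty ?_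
    filter_upwards [eventually_ge_atTop r] with x hx
    exact hχanti hr (lt_of_lt_of_le (Set.mem_Ioi.mp hr) hx) hx
  have hexp : ∀ r ∈ Set.Ioi (0 : ℝ), Real.exp (-χ r / 2) ≤ 1 := fun r hr => by
    rw [Real.exp_le_one_iff]
    linarith [hχ0 r hr]
  set m : ℝ → ℝ := fun x => (x * Real.exp (-χ x / 2) / 6) *
        (1 - 3 * f x + 8 * π * x ^ 2 * p_r x) + x / 3 with hm
  have hm' : ∀ r ∈ Set.Ioi (0 : ℝ), HasDerivAt m
      ((1 - Real.exp (-χ r / 2)) / 3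
        + 8 / 3 * π * r ^ 2 * Real.exp (-χ r / 2) * (ρ r + p_T r)) r := fun r hr => by
    have hr0 : r ≠ 0 := ne_of_gt hr
    have hfr : f r ≠ 0 := (hf r hr).ne'
    have hE := ((hχ' r hr).neg.div_const 2).exp
    have hA := (((hf' r hr).const_mul 3).const_sub 1).add
      ((((hasDerivAt_id r).pow 2).const_mul (8 * π)).mul (hp' r hr))
    have h := ((((hasDerivAt_id r).mul hE).div_const 6).mul hA).add
      ((hasDerivAt_id r).div_const 3)
    refine h.congr_deriv ?_
    simp only [id, Pi.add_apply, Pi.mul_apply, Pi.pow_apply, Pi.neg_apply]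
    field_simp
    ring
  have hmdiff : DifferentiableOn ℝ m (Set.Ioi 0) := fun r hr =>
    (hm' r hr).differentiableAt.differentiableWithinAt
  have hmono : MonotoneOn m (Set.Ioi 0) := by
    refine monotoneOn_of_deriv_nonneg (convex_Ioi 0) hmdiff.continuousOn
      (hmdiff.mono interior_subset) fun r hr => ?_
    rw [interior_Ioi] at hr
    rw [(hm' r hr).deriv]
    have h1 := hexp r hr
    exact add_nonneg (by linarith) (mul_nonneg (by positivity) (hNEC₂ r hr))
  have hle : ∀ r ∈ Set.Ioi (0 : ℝ), m r ≤ M := fun r hr => by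
    refine ge_of_tendsto hM ?_
    filter_upwards [eventually_ge_atTop r] with x hx
    exact hmono hr (lt_of_lt_of_le (Set.mem_Ioi.mp hr) hx) hx
  have hid : Tendsto (fun r : ℝ => r) (nhdsWithin 0 (Set.Ioi 0)) (nhds 0) :=
    tendsto_id.mono_left nhdsWithin_le_nhds
  have hmem : ∀ᶠ r in nhdsWithin (0 : ℝ) (Set.Ioi 0), r ∈ Set.Ioi (0 : ℝ) :=
    self_mem_nhdsWithin
  have hrf : Tendsto (fun r => r * f r) (nhdsWithin 0 (Set.Ioi 0)) (nhds 0) := by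
    obtain ⟨C, hC⟩ := hfbdd
    exact hid.zero_mul_isBoundedUnder_le ⟨C, by simpa [Filter.eventually_map] using hC⟩
  -- `r A(r) → 0` with `A = 1 - 3 f + 8 π r² p_r`
  have hrA : Tendsto (fun r => r - 3 * (r * f r) + 8 * π * (r ^ 3 * p_r r))
      (nhdsWithin 0 (Set.Ioi 0)) (nhds 0) := by
    simpa using (hid.sub (hrf.const_mul 3)).add (hpr0.const_mul (8 * π))
  have hrAE : Tendsto (fun r => (r - 3 * (r * f r) + 8 * π * (r ^ 3 * p_r r)) *
      Real.exp (-χ r / 2)) (nhdsWithin 0 (Set.Ioi 0)) (nhds 0) := by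
    refine hrA.zero_mul_isBoundedUnder_le ⟨1, ?_⟩
    rw [Filter.eventually_map]
    filter_upwards [hmem] with r hr
    simpa using hexp r hr
  have hm0 : Tendsto m (nhdsWithin 0 (Set.Ioi 0)) (nhds 0) := by
    have h := (hrAE.div_const 6).add (hid.div_const 3)
    simp only [zero_div, add_zero] at h
    refine h.congr fun r => ?_
    simp only [hm]
    ring
  refine le_of_tendsto hm0 ?_
  filter_upwards [hmem] with r hr
  exact hle r hr
end

section
/- Consider the static spherically symmetric Einstein equations on (0, ∞) (horizonless regular case) with the NEC, asymptotic flatness f(r) → 1 and χ(r) → 0 as r → ∞, and regularity at the origin: f is bounded on a neighborhood of 0 and r³ p_r(r) → 0 as r → 0⁺. If the ADM mass M := lim_{r→∞} m(r) exists and M = 0, then χ(r) = 0, f(r) = 1, and ρ(r) + p_T(r) = 0 for all r ∈ (0, ∞); i.e., the spacetime is Minkowski. -/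
/-!
The quasi-local mass `m(r) = (r e^{-χ/2} / 6) (1 - 3 f + 8π r² p_r) + r / 3` satisfies, by the
Einstein equations, `m' = (1 - e^{-χ/2}) / 3 + (8π / 3) r² e^{-χ/2} (ρ + p_T)`
(`hasDerivAt_quasiLocalMass`). The radial null energy condition makes `χ` nonincreasing, so
`χ → 0` at infinity forces `χ ≥ 0`; with the tangential condition both terms of `m'` are
nonnegative and `m` is monotone. Regularity gives `m → 0` at the origin, and `M = 0` gives `m → 0`
at infinity, so `m` vanishes identically and so do both terms of `m'`: `χ = 0` and `ρ + p_T = 0`.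
Then `χ' = 0` gives `ρ = -p_r`, whence `p_r' = 0`. With `p_r` constant, `m = 0` reads
`f = 1 + (8π / 3) p_r r²` (de Sitter or anti-de Sitter), and `f → 1` forces `p_r = 0`, so `f = 1`.
-/

open Real Filter

theorem monotoneOn_Ioi_of_hasDerivAt {g g' : ℝ → ℝ}
    (h : ∀ r ∈ Set.Ioi (0 : ℝ), HasDerivAt g (g' r) r)
    (h0 : ∀ r ∈ Set.Ioi (0 : ℝ), 0 ≤ g' r) : MonotoneOn g (Set.Ioi 0) := by
  apply monotoneOn_of_deriv_nonneg (convex_Ioi 0)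
  · exact fun r hr => (h r hr).continuousAt.continuousWithinAt
  · rw [interior_Ioi]
    exact fun r hr => (h r hr).differentiableAt.differentiableWithinAt
  · rw [interior_Ioi]
    intro r hr
    rw [(h r hr).deriv]
    exact h0 r hr

theorem le_of_monotoneOn_Ioi_of_tendsto_atTop {g : ℝ → ℝ} {a : ℝ}
    (h : MonotoneOn g (Set.Ioi 0)) (ha : Tendsto g atTop (nhds a)) {r : ℝ} (hr : 0 < r) :
    g r ≤ a := by
  apply ge_of_tendsto ha
  filter_upwards [eventually_ge_atTop r] with x hx
  exact h hr (hr.trans_le hx) hx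

theorem ge_of_monotoneOn_Ioi_of_tendsto_zero {g : ℝ → ℝ} {a : ℝ}
    (h : MonotoneOn g (Set.Ioi 0)) (ha : Tendsto g (nhdsWithin 0 (Set.Ioi 0)) (nhds a))
    {r : ℝ} (hr : 0 < r) : a ≤ g r := by
  apply le_of_tendsto ha
  filter_upwards [Ioo_mem_nhdsGT hr] with x hx
  exact h hx.1 hr hx.2.le

/-- The quasi-local mass, as a function of the metric functions `f`, `χ` and the radial
pressure `p_r`. -/
noncomputable def quasiLocalMass (f χ p_r : ℝ → ℝ) (x : ℝ) : ℝ :=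
  (x * Real.exp (-χ x / 2) / 6) * (1 - 3 * f x + 8 * π * x ^ 2 * p_r x) + x / 3

/-- Under the Einstein equations, all terms of `m'` other than those involving `χ` alone and
`ρ + p_T` cancel. -/
theorem hasDerivAt_quasiLocalMass {f χ ρ p_r p_T : ℝ → ℝ} {r : ℝ} (hr : 0 < r) (hf : 0 < f r)
    (hf' : HasDerivAt f ((1 - 8 * π * r ^ 2 * ρ r - f r) / r) r)
    (hχ' : HasDerivAt χ (-(8 * π * r / f r) * (ρ r + p_r r)) r)
    (hp' : HasDerivAt p_r ((ρ r + 4 * p_T r - 3 * p_r r) / (2 * r) -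
        (p_r r + ρ r) * (8 * π * p_r r * r ^ 2 + 1) / (2 * r * f r)) r) :
    HasDerivAt (quasiLocalMass f χ p_r)
      ((1 - Real.exp (-χ r / 2)) / 3 +
        8 * π / 3 * r ^ 2 * Real.exp (-χ r / 2) * (ρ r + p_T r)) r := by
  have he : HasDerivAt (fun x => Real.exp (-χ x / 2)) _ r := (hχ'.neg.div_const 2).exp
  have hA : HasDerivAt (fun x => 1 - 3 * f x + 8 * π * x ^ 2 * p_r x) _ r :=
    ((hf'.const_mul 3).const_sub 1).add ((((hasDerivAt_id r).pow 2).const_mul (8 * π)).mul hp')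
  have hm := ((((hasDerivAt_id r).mul he).div_const 6).mul hA).add ((hasDerivAt_id r).div_const 3)
  refine HasDerivAt.congr_deriv (f := quasiLocalMass f χ p_r) hm ?_
  simp only [id, Pi.neg_apply, Pi.mul_apply, Pi.pow_apply]
  generalize Real.exp (-χ r / 2) = e
  push_cast
  field_simp
  ring

/-- Regularity at the origin (with `χ ≥ 0`, which keeps `e^{-χ/2}` bounded) makes the
quasi-local mass vanish there. -/
theorem tendsto_quasiLocalMass_zero {f χ p_r : ℝ → ℝ}
    (hχ : ∀ r ∈ Set.Ioi (0 : ℝ), 0 ≤ χ r)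
    (hfbdd : ∃ C : ℝ, ∀ᶠ r in nhdsWithin (0 : ℝ) (Set.Ioi 0), |f r| ≤ C)
    (hpr0 : Tendsto (fun r => r ^ 3 * p_r r) (nhdsWithin (0 : ℝ) (Set.Ioi 0)) (nhds 0)) :
    Tendsto (quasiLocalMass f χ p_r) (nhdsWithin 0 (Set.Ioi 0)) (nhds 0) := by
  obtain ⟨C, hC⟩ := hfbdd
  have hid : Tendsto (fun r : ℝ => r) (nhdsWithin (0 : ℝ) (Set.Ioi 0)) (nhds 0) :=
    tendsto_id.mono_left nhdsWithin_le_nhds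
  have hrf : Tendsto (fun r => r * f r) (nhdsWithin (0 : ℝ) (Set.Ioi 0)) (nhds 0) :=
    hid.zero_mul_isBoundedUnder_le ⟨C, by simpa using hC⟩
  have hA : Tendsto (fun r => (r - 3 * (r * f r) + 8 * π * (r ^ 3 * p_r r)) / 6)
      (nhdsWithin (0 : ℝ) (Set.Ioi 0)) (nhds 0) := by
    simpa using ((hid.sub (hrf.const_mul 3)).add (hpr0.const_mul (8 * π))).div_const 6
  have hAe := hA.zero_mul_isBoundedUnder_le (g := fun r => Real.exp (-χ r / 2)) ⟨1, by
    rw [eventually_map]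
    filter_upwards [self_mem_nhdsWithin] with r hr
    have := hχ r hr
    simp only [Function.comp, Real.norm_eq_abs, Real.abs_exp, Real.exp_le_one_iff]
    linarith⟩
  have hsum := hAe.add (hid.div_const 3)
  rw [zero_div, add_zero] at hsum
  refine hsum.congr fun r => ?_
  simp only [quasiLocalMass]
  ring

/-- Rigidity of the positive mass theorem for the horizonless regular static spherically
symmetric case (units 16πG = c = 1): under the Einstein equations on `(0, ∞)` with the
NEC, asymptotic flatness (`f → 1`, `χ → 0`), regularity at the origin, and ADM mass
`M = lim_{r→∞} m(r)` equal to zero, one has `χ ≡ 0`, `f ≡ 1` and `ρ + p_T ≡ 0` on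
`(0, ∞)`: the spacetime is Minkowski. -/
theorem positive_mass_rigidity_static (M : ℝ) (f χ ρ p_r p_T : ℝ → ℝ)
    (hf : ∀ r ∈ Set.Ioi (0 : ℝ), 0 < f r)
    (hf' : ∀ r ∈ Set.Ioi (0 : ℝ),
      HasDerivAt f ((1 - 8 * π * r ^ 2 * ρ r - f r) / r) r)
    (hχ' : ∀ r ∈ Set.Ioi (0 : ℝ),
      HasDerivAt χ (-(8 * π * r / f r) * (ρ r + p_r r)) r)
    (hp' : ∀ r ∈ Set.Ioi (0 : ℝ),
      HasDerivAt p_r ((ρ r + 4 * p_T r - 3 * p_r r) / (2 * r) -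
        (p_r r + ρ r) * (8 * π * p_r r * r ^ 2 + 1) / (2 * r * f r)) r)
    (hNEC₁ : ∀ r ∈ Set.Ioi (0 : ℝ), 0 ≤ ρ r + p_r r)
    (hNEC₂ : ∀ r ∈ Set.Ioi (0 : ℝ), 0 ≤ ρ r + p_T r)
    -- asymptotic flatness
    (hfinfty : Tendsto f atTop (nhds 1))
    (hχinfty : Tendsto χ atTop (nhds 0))
    -- regularity at the origin
    (hfbdd : ∃ C : ℝ, ∀ᶠ r in nhdsWithin (0 : ℝ) (Set.Ioi 0), |f r| ≤ C)
    (hpr0 : Tendsto (fun r => r ^ 3 * p_r r) (nhdsWithin (0 : ℝ) (Set.Ioi 0)) (nhds 0))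
    -- ADM mass exists and vanishes
    (hM : Tendsto
      (fun x => (x * Real.exp (-χ x / 2) / 6) *
        (1 - 3 * f x + 8 * π * x ^ 2 * p_r x) + x / 3) atTop (nhds M))
    (hM0 : M = 0) :
    ∀ r ∈ Set.Ioi (0 : ℝ), χ r = 0 ∧ f r = 1 ∧ ρ r + p_T r = 0 := by
  have hχ : ∀ r ∈ Set.Ioi (0 : ℝ), 0 ≤ χ r := by
    intro r hr
    have hmono : MonotoneOn (fun x => -χ x) (Set.Ioi 0) := by
      refine monotoneOn_Ioi_of_hasDerivAt (fun x hx => (hχ' x hx).neg) fun x hx => ?_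
      have hx0 : 0 < x := hx
      have := mul_nonneg (div_pos (by positivity : 0 < 8 * π * x) (hf x hx)).le (hNEC₁ x hx)
      linarith
    have := le_of_monotoneOn_Ioi_of_tendsto_atTop hmono hχinfty.neg hr
    linarith
  have he : ∀ r ∈ Set.Ioi (0 : ℝ), Real.exp (-χ r / 2) ≤ 1 := by
    intro r hr
    have := hχ r hr
    rw [Real.exp_le_one_iff]
    linarith
  have hm' : ∀ r ∈ Set.Ioi (0 : ℝ), HasDerivAt (quasiLocalMass f χ p_r) _ r := fun r hr =>
    hasDerivAt_quasiLocalMass hr (hf r hr) (hf' r hr) (hχ' r hr) (hp' r hr)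
  have hterm : ∀ r ∈ Set.Ioi (0 : ℝ),
      0 ≤ 8 * π / 3 * r ^ 2 * Real.exp (-χ r / 2) * (ρ r + p_T r) := fun r hr =>
    mul_nonneg (by positivity) (hNEC₂ r hr)
  have hmono : MonotoneOn (quasiLocalMass f χ p_r) (Set.Ioi 0) :=
    monotoneOn_Ioi_of_hasDerivAt hm' fun r hr => by
      have := he r hr
      have := hterm r hr
      linarith
  have hm : ∀ r ∈ Set.Ioi (0 : ℝ), quasiLocalMass f χ p_r r = 0 := fun r hr =>
    le_antisymm (le_of_monotoneOn_Ioi_of_tendsto_atTop hmono (hM0 ▸ hM) hr)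
      (ge_of_monotoneOn_Ioi_of_tendsto_zero hmono (tendsto_quasiLocalMass_zero hχ hfbdd hpr0) hr)
  have hderiv : ∀ {g : ℝ → ℝ} {g' r : ℝ}, (∀ x ∈ Set.Ioi (0 : ℝ), g x = 0) →
      r ∈ Set.Ioi (0 : ℝ) → HasDerivAt g g' r → g' = 0 := by
    intro g g' r hg hr hg'
    refine hg'.unique ((hasDerivAt_const r (0 : ℝ)).congr_of_eventuallyEq ?_)
    filter_upwards [Ioi_mem_nhds hr] with x hx using hg x hx
  have hχ0 : ∀ r ∈ Set.Ioi (0 : ℝ), χ r = 0 := by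
    intro r hr
    have h1 := hderiv hm hr (hm' r hr)
    have h2 := he r hr
    have h3 := hterm r hr
    have h4 : Real.exp (-χ r / 2) = 1 := by linarith
    rw [Real.exp_eq_one_iff] at h4
    linarith
  have hρT : ∀ r ∈ Set.Ioi (0 : ℝ), ρ r + p_T r = 0 := by
    intro r hr
    have hr0 : 0 < r := hr
    have h1 := hderiv hm hr (hm' r hr)
    rw [hχ0 r hr] at h1
    have h2 : 8 * π / 3 * r ^ 2 * (ρ r + p_T r) = 0 := by simpa using h1
    exact (mul_eq_zero.mp h2).resolve_left (by positivity)
  have hρr : ∀ r ∈ Set.Ioi (0 : ℝ), ρ r + p_r r = 0 := by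
    intro r hr
    have hr0 : 0 < r := hr
    have := hf r hr
    exact (mul_eq_zero.mp (hderiv hχ0 hr (hχ' r hr))).resolve_left
      (neg_ne_zero.mpr (by positivity))
  have hp0 : ∀ r ∈ Set.Ioi (0 : ℝ), HasDerivAt p_r 0 r := by
    intro r hr
    refine (hp' r hr).congr_deriv ?_
    have h1 : p_r r = -ρ r := by linarith [hρr r hr]
    have h2 : p_T r = -ρ r := by linarith [hρT r hr]
    rw [h1, h2]
    ring
  have hpc : ∀ r ∈ Set.Ioi (0 : ℝ), p_r r = p_r 1 := by
    intro r hr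
    exact (isOpen_Ioi.is_const_of_deriv_eq_zero (convex_Ioi 0).isPreconnected
      (fun x hx => (hp0 x hx).differentiableAt.differentiableWithinAt)
      (fun x hx => (hp0 x hx).deriv)) hr (Set.mem_Ioi.mpr one_pos)
  have hfeq : ∀ r ∈ Set.Ioi (0 : ℝ), f r = 1 + 8 * π / 3 * p_r 1 * r ^ 2 := by
    intro r hr
    have hr0 : r ≠ 0 := ne_of_gt hr
    have h1 := hm r hr
    simp only [quasiLocalMass, hχ0 r hr, hpc r hr, neg_zero, zero_div, Real.exp_zero] at h1
    have h2 : r * (f r - (1 + 8 * π / 3 * p_r 1 * r ^ 2)) = 0 := by linear_combination -2 * h1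
    linarith [(mul_eq_zero.mp h2).resolve_left hr0]
  -- The constant `(8π / 3) p_r` equals `(f - 1) / r²`, which tends to `0` at infinity.
  have hk : 8 * π / 3 * p_r 1 = 0 := by
    have h1 : Tendsto (fun r => (f r - 1) * (r ^ 2)⁻¹) atTop (nhds ((1 - 1) * 0)) :=
      (hfinfty.sub_const 1).mul (tendsto_inv_atTop_zero.comp (tendsto_pow_atTop two_ne_zero))
    rw [mul_zero] at h1
    refine tendsto_nhds_unique (tendsto_const_nhds.congr' ?_) h1
    filter_upwards [eventually_gt_atTop 0] with r hr
    rw [hfeq r hr]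
    field_simp
    ring
  intro r hr
  exact ⟨hχ0 r hr, by rw [hfeq r hr, hk, zero_mul, add_zero], hρT r hr⟩
end

section
/- In the generalized Vaidya spacetime satisfying the NEC, the Penrose-like inequality 3M ≥ κ𝒜/(4π) + √(𝒜/(4π)) holds, i.e. 3M ≥ κ r_h² + r_h. Moreover, if equality holds, then 𝓜(v, r) = M for all v ≥ v₀ and r ≥ r_h. -/
/-!
By the NEC and asymptotic flatness `𝓜r ≥ 0`, so `𝓜` is nondecreasing in both arguments and is
bounded by its iterated limit `M`. In particular `r_h / 2 = 𝓜 v₀ r_h ≤ M`, and the right-hand side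
of the inequality equals `3 * r_h / 2 - r_h * 𝓜r v₀ r_h ≤ 3 * r_h / 2`. Equality forces
`𝓜 v₀ r_h = M`, and then monotonicity squeezes `𝓜 v r` between `𝓜 v₀ r_h` and `M`.
-/

open Real Filter

/-- Generalized Vaidya spacetime (units 16πG = c = 1): with mass function `𝓜(v, r)`,
partial derivatives `𝓜ᵥ = ∂_v 𝓜` and `𝓜ᵣ = ∂_r 𝓜`, the NEC (`∂_v 𝓜 ≥ 0` and
`r ↦ r⁻² ∂_r 𝓜` nonincreasing), asymptotic flatness (`r⁻² ∂_r 𝓜 → 0`), ADM mass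
`M = lim_{v→∞} lim_{r→∞} 𝓜(v, r)`, and a marginal trapped surface at `(v₀, r_h)`
(`𝓜(v₀, r_h) = r_h/2`) with surface gravity `κ = (1 − 2∂_r𝓜(v₀, r_h))/(2r_h)` and area
`𝒜 = 4π r_h²`, the Penrose-like inequality `3M ≥ κ𝒜/(4π) + √(𝒜/(4π))`, i.e.
`3M ≥ κ r_h² + r_h`, holds; and if equality holds then `𝓜(v, r) = M` for all `v ≥ v₀`
and `r ≥ r_h`. -/
theorem vaidya_penrose_like (𝓜 𝓜v 𝓜r : ℝ → ℝ → ℝ) (L : ℝ → ℝ)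
    (M v₀ r_h κ 𝒜 : ℝ) (hr : 0 < r_h)
    -- partial derivatives exist everywhere on the domain ℝ × (0, ∞)
    (hdv : ∀ v : ℝ, ∀ r ∈ Set.Ioi (0 : ℝ), HasDerivAt (fun w => 𝓜 w r) (𝓜v v r) v)
    (hdr : ∀ v : ℝ, ∀ r ∈ Set.Ioi (0 : ℝ), HasDerivAt (fun x => 𝓜 v x) (𝓜r v r) r)
    -- NEC
    (hNEC₁ : ∀ v : ℝ, ∀ r ∈ Set.Ioi (0 : ℝ), 0 ≤ 𝓜v v r)
    (hNEC₂ : ∀ v : ℝ, AntitoneOn (fun r => 𝓜r v r / r ^ 2) (Set.Ioi 0))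
    -- asymptotic flatness
    (hflat : ∀ v : ℝ, Tendsto (fun r => 𝓜r v r / r ^ 2) atTop (nhds 0))
    -- ADM mass as iterated limit, assumed to exist
    (hL : ∀ v : ℝ, Tendsto (fun r => 𝓜 v r) atTop (nhds (L v)))
    (hM : Tendsto L atTop (nhds M))
    -- marginal trapped surface, surface gravity, area
    (hmts : 𝓜 v₀ r_h = r_h / 2)
    (hκ : κ = (1 - 2 * 𝓜r v₀ r_h) / (2 * r_h))
    (h𝒜 : 𝒜 = 4 * π * r_h ^ 2) :
    (3 * M ≥ κ * 𝒜 / (4 * π) + Real.sqrt (𝒜 / (4 * π)) ∧ 3 * M ≥ κ * r_h ^ 2 + r_h) ∧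
    (3 * M = κ * r_h ^ 2 + r_h →
      ∀ v ≥ v₀, ∀ r ≥ r_h, 𝓜 v r = M) := by
  have hr_nonneg : ∀ v : ℝ, ∀ r ∈ Set.Ioi (0 : ℝ), 0 ≤ 𝓜r v r := by
    intro v r hr0
    have hr0' : (0 : ℝ) < r := hr0
    have h0 : 0 ≤ 𝓜r v r / r ^ 2 := by
      refine le_of_tendsto (hflat v) ?_
      filter_upwards [eventually_ge_atTop r] with x hx
      exact hNEC₂ v hr0 (lt_of_lt_of_le hr0' hx) hx
    have h1 : 𝓜r v r = 𝓜r v r / r ^ 2 * r ^ 2 := by field_simp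
    rw [h1]
    positivity
  have mono_r : ∀ v : ℝ, MonotoneOn (fun r => 𝓜 v r) (Set.Ioi 0) := by
    intro v
    refine monotoneOn_of_deriv_nonneg (convex_Ioi 0)
      (fun x hx => (hdr v x hx).continuousAt.continuousWithinAt) ?_ ?_ <;>
      rw [interior_Ioi]
    · exact fun x hx => (hdr v x hx).differentiableAt.differentiableWithinAt
    · exact fun x hx => (hdr v x hx).deriv ▸ hr_nonneg v x hx
  have mono_v : ∀ r ∈ Set.Ioi (0 : ℝ), Monotone (fun v => 𝓜 v r) := by
    intro r hr0
    refine monotone_of_deriv_nonneg (fun v => (hdv v r hr0).differentiableAt) ?_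
    exact fun v => (hdv v r hr0).deriv ▸ hNEC₁ v r hr0
  have le_L : ∀ v : ℝ, ∀ r ∈ Set.Ioi (0 : ℝ), 𝓜 v r ≤ L v := by
    intro v r hr0
    refine ge_of_tendsto (hL v) ?_
    filter_upwards [eventually_ge_atTop r] with x hx
    exact mono_r v hr0 (lt_of_lt_of_le hr0 hx) hx
  have mono_L : Monotone L := by
    intro v w hvw
    refine le_of_tendsto_of_tendsto (hL v) (hL w) ?_
    filter_upwards [eventually_gt_atTop 0] with x hx
    exact mono_v x hx hvw
  have le_M : ∀ v : ℝ, ∀ r ∈ Set.Ioi (0 : ℝ), 𝓜 v r ≤ M := fun v r hr0 =>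
    (le_L v r hr0).trans (mono_L.ge_of_tendsto hM v)
  have hκr : κ * r_h ^ 2 = r_h / 2 - r_h * 𝓜r v₀ r_h := by
    rw [hκ]
    field_simp
  have hA : 𝒜 / (4 * π) = r_h ^ 2 := by
    rw [h𝒜]
    field_simp
  have hprod : 0 ≤ r_h * 𝓜r v₀ r_h := mul_nonneg hr.le (hr_nonneg v₀ r_h hr)
  have hhor : r_h / 2 ≤ M := hmts ▸ le_M v₀ r_h hr
  have main : 3 * M ≥ κ * r_h ^ 2 + r_h := by linarith
  refine ⟨⟨?_, main⟩, ?_⟩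
  · rw [mul_div_assoc, hA, Real.sqrt_sq hr.le]
    exact main
  · intro heq v hv r hrr
    have hr0 : r ∈ Set.Ioi (0 : ℝ) := lt_of_lt_of_le hr hrr
    have h1 : 𝓜 v₀ r_h ≤ 𝓜 v₀ r := mono_r v₀ hr hr0 hrr
    have h2 : 𝓜 v₀ r ≤ 𝓜 v r := mono_v r hr0 hv
    have h3 := le_M v r hr0
    linarith
end

section
/- In the generalized Vaidya spacetime satisfying the NEC, the Penrose inequality 2M ≥ √(𝒜/(4π)) holds, i.e. 2M ≥ r_h. -/
/-! For fixed `v`, an antitone function tending to `0` at infinity is nonnegative, so `∂_r 𝓜 ≥ 0` and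
`𝓜(v, ·)` increases to its limit `L v`. Since `∂_v 𝓜 ≥ 0`, the limit `L` is itself monotone and
increases to `M`. Hence `r_h / 2 = 𝓜(v₀, r_h) ≤ L v₀ ≤ M`. -/

open Real Filter

/-- Generalized Vaidya spacetime (units 16πG = c = 1): with mass function `𝓜(v, r)`,
partial derivatives `𝓜ᵥ = ∂_v 𝓜` and `𝓜ᵣ = ∂_r 𝓜`, the NEC (`∂_v 𝓜 ≥ 0` and
`r ↦ r⁻² ∂_r 𝓜` nonincreasing), asymptotic flatness (`r⁻² ∂_r 𝓜 → 0`), ADM mass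
`M = lim_{v→∞} lim_{r→∞} 𝓜(v, r)`, and a marginal trapped surface at `(v₀, r_h)`
(`𝓜(v₀, r_h) = r_h/2`) with area `𝒜 = 4π r_h²`, the Penrose inequality
`2M ≥ √(𝒜/(4π))`, i.e. `2M ≥ r_h`, holds. -/
theorem vaidya_penrose (𝓜 𝓜v 𝓜r : ℝ → ℝ → ℝ) (L : ℝ → ℝ)
    (M v₀ r_h 𝒜 : ℝ) (hr : 0 < r_h)
    -- partial derivatives exist everywhere on the domain ℝ × (0, ∞)
    (hdv : ∀ v : ℝ, ∀ r ∈ Set.Ioi (0 : ℝ), HasDerivAt (fun w => 𝓜 w r) (𝓜v v r) v)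
    (hdr : ∀ v : ℝ, ∀ r ∈ Set.Ioi (0 : ℝ), HasDerivAt (fun x => 𝓜 v x) (𝓜r v r) r)
    -- NEC
    (hNEC₁ : ∀ v : ℝ, ∀ r ∈ Set.Ioi (0 : ℝ), 0 ≤ 𝓜v v r)
    (hNEC₂ : ∀ v : ℝ, AntitoneOn (fun r => 𝓜r v r / r ^ 2) (Set.Ioi 0))
    -- asymptotic flatness
    (hflat : ∀ v : ℝ, Tendsto (fun r => 𝓜r v r / r ^ 2) atTop (nhds 0))
    -- ADM mass as iterated limit, assumed to exist
    (hL : ∀ v : ℝ, Tendsto (fun r => 𝓜 v r) atTop (nhds (L v)))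
    (hM : Tendsto L atTop (nhds M))
    -- marginal trapped surface and its area
    (hmts : 𝓜 v₀ r_h = r_h / 2)
    (h𝒜 : 𝒜 = 4 * π * r_h ^ 2) :
    2 * M ≥ Real.sqrt (𝒜 / (4 * π)) ∧ 2 * M ≥ r_h := by
  have hr_nonneg : ∀ v : ℝ, ∀ r ∈ Set.Ioi (0 : ℝ), 0 ≤ 𝓜r v r := by
    intro v r hr0
    have hr0' : (0 : ℝ) < r := hr0
    have h : 0 ≤ 𝓜r v r / r ^ 2 := by
      refine le_of_tendsto (hflat v) ?_
      filter_upwards [eventually_ge_atTop r] with x hx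
      exact hNEC₂ v hr0 (Set.mem_Ioi.mpr (hr0'.trans_le hx)) hx
    have h2 := mul_nonneg h (sq_nonneg r)
    rwa [div_mul_cancel₀ _ (pow_pos hr0' 2).ne'] at h2
  have hmono_r : ∀ v : ℝ, MonotoneOn (fun x => 𝓜 v x) (Set.Ioi 0) := by
    intro v
    refine monotoneOn_of_deriv_nonneg (convex_Ioi 0)
      (fun x hx => (hdr v x hx).continuousAt.continuousWithinAt) ?_ ?_
    · intro x hx
      rw [interior_Ioi] at hx
      exact (hdr v x hx).differentiableAt.differentiableWithinAt
    · intro x hx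
      rw [interior_Ioi] at hx
      rw [(hdr v x hx).deriv]
      exact hr_nonneg v x hx
  have hmono_v : ∀ r ∈ Set.Ioi (0 : ℝ), Monotone (fun w => 𝓜 w r) := by
    intro r hr0
    refine monotone_of_deriv_nonneg (fun v => (hdv v r hr0).differentiableAt) ?_
    intro v
    rw [(hdv v r hr0).deriv]
    exact hNEC₁ v r hr0
  have hLmono : Monotone L := by
    intro v w hvw
    refine le_of_tendsto_of_tendsto (hL v) (hL w) ?_
    filter_upwards [eventually_gt_atTop (0 : ℝ)] with x hx
    exact hmono_v x hx hvw
  have h1 : 𝓜 v₀ r_h ≤ L v₀ := by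
    refine ge_of_tendsto (hL v₀) ?_
    filter_upwards [eventually_ge_atTop r_h] with x hx
    exact hmono_r v₀ hr (Set.mem_Ioi.mpr (hr.trans_le hx)) hx
  have h2 : L v₀ ≤ M := hLmono.ge_of_tendsto hM v₀
  have h3 : 2 * M ≥ r_h := by linarith
  have hA : Real.sqrt (𝒜 / (4 * π)) = r_h := by
    rw [h𝒜, mul_div_cancel_left₀ _ (by positivity), Real.sqrt_sq hr.le]
  exact ⟨hA ▸ h3, h3⟩
end
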